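/- arXiv:1502.05496 — 2 statements merged into one kernel-verified Lean document; each statement's English description precedes it below -/
import Mathlib

section
/- Assume E₀, U, L, K satisfy the hypothesis and define h := {(x,y) ∈ BD(G) ⊕ BD(G) : π*_{BD(G)}x ∈ E₀ and K^⋄Kπ*_{BD(G)}x − L^⋄π*_{BD(D)}Ġy ∈ E}. Then h is selfadjoint, i.e. h = h*, where h* := {(v,−u) : (u,v) ∈ h}^⊥ with the orthogonal complement taken in BD(G) ⊕ BD(G). -/
open scoped ComplexInnerProductSpace
open Filter Topology Classical

noncomputable section

variable {E H : Type*}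
  [NormedAddCommGroup E] [InnerProductSpace ℂ E] [CompleteSpace E]
  [NormedAddCommGroup H] [InnerProductSpace ℂ H] [CompleteSpace H]

/-- The operator `G := (−D₀)*`. -/
def Gop (D₀ : H →ₗ.[ℂ] E) : E →ₗ.[ℂ] H := (-D₀).adjoint

/-- The operator `D := −(G₀)*`. -/
def Dop (G₀ : E →ₗ.[ℂ] H) : H →ₗ.[ℂ] E := -(G₀.adjoint)

/-- Pointwise application of `G`, defined to be `0` off the domain. -/
def Gap (D₀ : H →ₗ.[ℂ] E) (u : E) : H :=
  if h : u ∈ (Gop D₀).domain then Gop D₀ ⟨u, h⟩ else 0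

/-- Pointwise application of `D`, defined to be `0` off the domain. -/
def Dap (G₀ : E →ₗ.[ℂ] H) (w : H) : E :=
  if h : w ∈ (Dop G₀).domain then Dop G₀ ⟨w, h⟩ else 0

/-- The graph inner product of `D_G`: `⟪x,y⟫_E + ⟪Gx,Gy⟫_H`. -/
def innG (D₀ : H →ₗ.[ℂ] E) (x y : E) : ℂ := ⟪x, y⟫ + ⟪Gap D₀ x, Gap D₀ y⟫

/-- The graph inner product of `D_D`: `⟪x,y⟫_H + ⟪Dx,Dy⟫_E`. -/
def innD (G₀ : E →ₗ.[ℂ] H) (x y : H) : ℂ := ⟪x, y⟫ + ⟪Dap G₀ x, Dap G₀ y⟫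

/-- The boundary data space `BD(G)`, the orthogonal complement of `D(G₀)` in `D_G`. -/
def BDG (G₀ : E →ₗ.[ℂ] H) (D₀ : H →ₗ.[ℂ] E) : Set E :=
  {u | u ∈ (Gop D₀).domain ∧ ∀ v ∈ G₀.domain, innG D₀ u v = 0}

/-- The boundary data space `BD(D)`, the orthogonal complement of `D(D₀)` in `D_D`. -/
def BDD (G₀ : E →ₗ.[ℂ] H) (D₀ : H →ₗ.[ℂ] E) : Set H :=
  {w | w ∈ (Dop G₀).domain ∧ ∀ v ∈ D₀.domain, innD G₀ w v = 0}

variable {U E₀ : Type*}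
  [NormedAddCommGroup U] [InnerProductSpace ℂ U] [CompleteSpace U]
  [NormedAddCommGroup E₀] [InnerProductSpace ℂ E₀] [CompleteSpace E₀]

/-- Closedness of the operator `(L,K) : E₀ ⊆ E → H ⊕ U`: whenever `wₙ` in `E₀` with `wₙ → w`
in `E`, `Lwₙ → v` in `H` and `Kwₙ → z` in `U`, then `w ∈ E₀`, `Lw = v` and `Kw = z`. -/
def ClosedLK (j : E₀ →L[ℂ] E) (L : E₀ →L[ℂ] H) (K : E₀ →L[ℂ] U) : Prop :=
  ∀ (f : ℕ → E₀) (w : E) (v : H) (z : U),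
    Tendsto (fun n => j (f n)) atTop (nhds w) →
    Tendsto (fun n => L (f n)) atTop (nhds v) →
    Tendsto (fun n => K (f n)) atTop (nhds z) →
    ∃ w₀ : E₀, j w₀ = w ∧ L w₀ = v ∧ K w₀ = z

/-- The boundary relation `h` associated with `A`:
`h = {(x,y) ∈ BD(G) ⊕ BD(G) : π*x ∈ E₀, K^⋄Kπ*x − L^⋄π*Ġy ∈ E}`. -/
def hRel (G₀ : E →ₗ.[ℂ] H) (D₀ : H →ₗ.[ℂ] E) (j : E₀ →L[ℂ] E) (L : E₀ →L[ℂ] H)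
    (K : E₀ →L[ℂ] U) : Set (E × E) :=
  {p | p.1 ∈ BDG G₀ D₀ ∧ p.2 ∈ BDG G₀ D₀ ∧
    ∃ x₀ : E₀, j x₀ = p.1 ∧
      ∃ e : E, ∀ z : E₀, (⟪e, j z⟫ : ℂ) = ⟪K x₀, K z⟫ - ⟪Gap D₀ p.2, L z⟫}

/-- The adjoint relation of `h ⊆ BD(G) ⊕ BD(G)`, namely `h* = {(v,−u) : (u,v) ∈ h}^⊥` with
the orthogonal complement taken in `BD(G) ⊕ BD(G)`: a pair `(x,y) ∈ BD(G) ⊕ BD(G)` belongs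
to `h*` iff `⟪v,x⟫_{BD(G)} = ⟪u,y⟫_{BD(G)}` for all `(u,v) ∈ h`. -/
def adjBDG (G₀ : E →ₗ.[ℂ] H) (D₀ : H →ₗ.[ℂ] E) (h : Set (E × E)) : Set (E × E) :=
  {q | q.1 ∈ BDG G₀ D₀ ∧ q.2 ∈ BDG G₀ D₀ ∧
    ∀ p ∈ h, innG D₀ p.2 q.1 = innG D₀ p.1 q.2}

/-! A symmetric linear relation `R` for which `1 + R` is onto is selfadjoint. To apply this to the
boundary relation `h`, note first that `D(G₀)` is dense and `K` vanishes on it, so the element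
`e` with `K^⋄Kx - L^⋄Gy = e` can only be `y` itself, because `y ⊥ D(G₀)` in the graph inner product.
Thus `(x, y) ∈ h` iff `⟪y, z⟫ = ⟪Kx, Kz⟫` for all `z ∈ E₀` in the graph inner product, which is
symmetric. For the range condition, given `f ∈ BD(G)` project `(f, 0)` orthogonally onto the closed
subspace of all `(z, Kz)`: the projection `(u, Ku)` satisfies `⟪f - u, z⟫ = ⟪Ku, Kz⟫`, and taking
`z ∈ D(G₀)` shows `u ∈ BD(G)`.
-/

section LinearRelation

variable {𝕜 V X Y Z : Type*} [RCLike 𝕜] [AddCommGroup V] [Module 𝕜 V]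
  [NormedAddCommGroup X] [InnerProductSpace 𝕜 X] [NormedAddCommGroup Y] [InnerProductSpace 𝕜 Y]
  [NormedAddCommGroup Z] [InnerProductSpace 𝕜 Z]

theorem adjoint_eq_self_of_le_adjoint_of_exists_sub_mem {R : Submodule 𝕜 (X × X)}
    (hsymm : R ≤ R.adjoint) (hrange : ∀ f, ∃ u, (u, f - u) ∈ R) : R.adjoint = R := by
  refine le_antisymm (fun q hq ↦ ?_) hsymm
  obtain ⟨u, hu⟩ := hrange (q.1 + q.2)
  obtain ⟨w, hw⟩ := hrange (q.1 - u)
  -- `(d, -d)` lies in the adjoint relation for `d = q.1 - u`, and `d` is in the range of `1 + R`.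
  have hdiff : (q.1 - u, -(q.1 - u)) ∈ R.adjoint := by
    convert R.adjoint.sub_mem hq (hsymm hu) using 1
    ext
    · rfl
    · simp only [Prod.snd_sub]
      abel
  have hd : q.1 - u = 0 := by
    have h := (Submodule.mem_adjoint_iff R _).1 hdiff _ _ hw
    rwa [inner_neg_right, sub_neg_eq_add, ← inner_add_left, sub_add_cancel,
      inner_self_eq_zero] at h
  rw [sub_eq_zero] at hd
  rw [← hd, add_sub_cancel_left] at hu
  exact hu

/-- The operator `v ↦ (S v, T v)` into the Hilbert sum of `X` and `Y`. -/
def l2Prod (S : V →ₗ[𝕜] X) (T : V →ₗ[𝕜] Y) : V →ₗ[𝕜] WithLp 2 (X × Y) :=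
  (WithLp.linearEquiv 2 𝕜 (X × Y)).symm.toLinearMap ∘ₗ S.prod T

theorem inner_l2Prod_right (S : V →ₗ[𝕜] X) (T : V →ₗ[𝕜] Y) (w : WithLp 2 (X × Y)) (v : V) :
    inner 𝕜 w (l2Prod S T v) = inner 𝕜 w.fst (S v) + inner 𝕜 w.snd (T v) :=
  rfl

theorem exists_forall_inner_sub_eq_inner (T : V →ₗ[𝕜] X) (K : V →ₗ[𝕜] Z)
    [(LinearMap.range (l2Prod T K)).HasOrthogonalProjection] (f : X) :
    ∃ u, ∀ z, inner 𝕜 (f - T u) (T z) = inner 𝕜 (K u) (K z) := by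
  obtain ⟨_, ⟨u, rfl⟩, hu⟩ :=
    Submodule.HasOrthogonalProjection.exists_orthogonal (K := LinearMap.range (l2Prod T K))
      (WithLp.toLp 2 (f, (0 : Z)))
  refine ⟨u, fun z ↦ ?_⟩
  have hz : inner 𝕜 (f - T u) (T z) + inner 𝕜 (0 - K u) (K z) = 0 :=
    (Submodule.mem_orthogonal' _ _).1 hu _ ⟨z, rfl⟩
  rwa [zero_sub, inner_neg_left, add_neg_eq_zero] at hz

/-- The domain of `G` with its graph inner product, encoded as the graph of `G` inside the Hilbert
sum of `X` and `Y`. -/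
def graphSpace (G : X →ₗ.[𝕜] Y) : Submodule 𝕜 (WithLp 2 (X × Y)) :=
  G.graph.comap (WithLp.linearEquiv 2 𝕜 (X × Y)).toLinearMap

theorem mem_graphSpace_iff {G : X →ₗ.[𝕜] Y} {w : WithLp 2 (X × Y)} :
    w ∈ graphSpace G ↔ ∃ x : G.domain, x = w.fst ∧ G x = w.snd :=
  G.mem_graph_iff

theorem toLp_mem_graphSpace (G : X →ₗ.[𝕜] Y) (x : G.domain) :
    WithLp.toLp 2 ((x : X), G x) ∈ graphSpace G :=
  G.mem_graph x

theorem eq_of_mem_graphSpace_of_fst_eq {G : X →ₗ.[𝕜] Y} {w w' : WithLp 2 (X × Y)}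
    (hw : w ∈ graphSpace G) (hw' : w' ∈ graphSpace G) (h : w.fst = w'.fst) : w = w' :=
  WithLp.ofLp_injective 2 (Prod.ext h (G.mem_graph_snd_inj hw hw' h))

theorem mem_graphSpace_orthogonal_iff {G : X →ₗ.[𝕜] Y} {w : WithLp 2 (X × Y)} :
    w ∈ (graphSpace G)ᗮ ↔ ∀ x : G.domain, inner 𝕜 w.fst (x : X) + inner 𝕜 w.snd (G x) = 0 := by
  rw [Submodule.mem_orthogonal']
  constructor
  · exact fun h x ↦ h _ (toLp_mem_graphSpace G x)
  · intro h v hv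
    obtain ⟨x, hx, hGx⟩ := mem_graphSpace_iff.1 hv
    rw [WithLp.prod_inner_apply, WithLp.ofLp_fst, WithLp.ofLp_snd, WithLp.ofLp_fst,
      WithLp.ofLp_snd, ← hx, ← hGx, h]

/-- The abstract boundary data space `BD(G)`: the orthogonal complement of the domain of `G₀` in
the domain of `G`, with respect to the graph inner product. -/
def boundarySpace (G₀ G : X →ₗ.[𝕜] Y) : Submodule 𝕜 (WithLp 2 (X × Y)) :=
  graphSpace G ⊓ (graphSpace G₀)ᗮ

/-- The relation `h` of all `(x, y)` in `BD(G) ⊕ BD(G)` with `x ∈ E₀` and `K^⋄Kx - L^⋄Gy ∈ E`.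
Here `V` plays the role of `E₀`, included in `E` by `j`, and `Gy` is the second component of `y`
as a point of the graph. -/
def boundaryRel (G₀ G : X →ₗ.[𝕜] Y) (j : V →ₗ[𝕜] X) (L : V →ₗ[𝕜] Y) (K : V →ₗ[𝕜] Z) :
    Submodule 𝕜 (boundarySpace G₀ G × boundarySpace G₀ G) where
  carrier := {p | ∃ v, j v = p.1.1.fst ∧
    ∃ e, ∀ z, inner 𝕜 e (j z) = inner 𝕜 (K v) (K z) - inner 𝕜 p.2.1.snd (L z)}
  zero_mem' := ⟨0, by simp, 0, by simp⟩
  add_mem' := by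
    rintro p q ⟨v, hv, e, he⟩ ⟨v', hv', e', he'⟩
    refine ⟨v + v', by simp [hv, hv'], e + e', fun z ↦ ?_⟩
    simp only [map_add, inner_add_left, Prod.snd_add, Submodule.coe_add, WithLp.add_snd, he, he']
    ring
  smul_mem' := by
    rintro c p ⟨v, hv, e, he⟩
    refine ⟨c • v, by simp [hv], c • e, fun z ↦ ?_⟩
    simp [inner_smul_left, he, mul_sub]

variable {G₀ G : X →ₗ.[𝕜] Y} {j : V →ₗ[𝕜] X} {L : V →ₗ[𝕜] Y} {K : V →ₗ[𝕜] Z}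

theorem eq_fst_of_forall_inner_eq (hdense : Dense (G₀.domain : Set X))
    (hG₀L : graphSpace G₀ ≤ (LinearMap.ker K).map (l2Prod j L)) {y : WithLp 2 (X × Y)}
    (hy : y ∈ (graphSpace G₀)ᗮ) {e : X} {v : V}
    (he : ∀ z, inner 𝕜 e (j z) = inner 𝕜 (K v) (K z) - inner 𝕜 y.snd (L z)) : e = y.fst := by
  refine hdense.eq_of_inner_left 𝕜 fun x hx ↦ ?_
  obtain ⟨z, hz, hzx⟩ := hG₀L (toLp_mem_graphSpace G₀ ⟨x, hx⟩)
  obtain rfl : j z = x := congrArg WithLp.fst hzx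
  have hLz : L z = G₀ ⟨j z, hx⟩ := congrArg WithLp.snd hzx
  rw [he, LinearMap.mem_ker.1 hz, inner_zero_right, zero_sub, hLz,
    eq_neg_of_add_eq_zero_left (mem_graphSpace_orthogonal_iff.1 hy ⟨j z, hx⟩)]

theorem mem_boundaryRel_iff (hdense : Dense (G₀.domain : Set X))
    (hG₀L : graphSpace G₀ ≤ (LinearMap.ker K).map (l2Prod j L))
    (hLG : LinearMap.range (l2Prod j L) ≤ graphSpace G)
    {p : boundarySpace G₀ G × boundarySpace G₀ G} :
    p ∈ boundaryRel G₀ G j L K ↔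
      ∃ v, l2Prod j L v = p.1 ∧ ∀ z, inner 𝕜 p.2.1 (l2Prod j L z) = inner 𝕜 (K v) (K z) := by
  simp only [inner_l2Prod_right]
  constructor
  · rintro ⟨v, hv, e, he⟩
    obtain rfl := eq_fst_of_forall_inner_eq hdense hG₀L p.2.2.2 he
    exact ⟨v, eq_of_mem_graphSpace_of_fst_eq (hLG ⟨v, rfl⟩) p.1.2.1 hv,
      fun z ↦ add_eq_of_eq_sub (he z)⟩
  · rintro ⟨v, hv, h⟩
    exact ⟨v, congrArg WithLp.fst hv, p.2.1.fst, fun z ↦ eq_sub_of_add_eq (h z)⟩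

theorem boundaryRel_le_adjoint (hdense : Dense (G₀.domain : Set X))
    (hG₀L : graphSpace G₀ ≤ (LinearMap.ker K).map (l2Prod j L))
    (hLG : LinearMap.range (l2Prod j L) ≤ graphSpace G) :
    boundaryRel G₀ G j L K ≤ (boundaryRel G₀ G j L K).adjoint := by
  intro q hq
  rw [Submodule.mem_adjoint_iff]
  intro a b hab
  obtain ⟨v, hv, hvq⟩ := (mem_boundaryRel_iff hdense hG₀L hLG).1 hq
  obtain ⟨u, hu, hub⟩ := (mem_boundaryRel_iff hdense hG₀L hLG).1 hab
  rw [sub_eq_zero]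
  calc inner 𝕜 b.1 q.1.1 = inner 𝕜 (K u) (K v) := by rw [← hv, hub]
    _ = inner 𝕜 a.1 q.2.1 := by rw [← inner_conj_symm, ← hvq, hu, inner_conj_symm]

theorem exists_mem_boundaryRel_sub (hdense : Dense (G₀.domain : Set X))
    (hG₀L : graphSpace G₀ ≤ (LinearMap.ker K).map (l2Prod j L))
    (hLG : LinearMap.range (l2Prod j L) ≤ graphSpace G)
    [(LinearMap.range (l2Prod (l2Prod j L) K)).HasOrthogonalProjection]
    (f : boundarySpace G₀ G) : ∃ u, (u, f - u) ∈ boundaryRel G₀ G j L K := by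
  obtain ⟨v, hv⟩ := exists_forall_inner_sub_eq_inner (l2Prod j L) K (f : WithLp 2 (X × Y))
  have horth : f.1 - l2Prod j L v ∈ (graphSpace G₀)ᗮ := by
    refine (Submodule.mem_orthogonal' _ _).2 fun w hw ↦ ?_
    obtain ⟨z, hz, rfl⟩ := hG₀L hw
    rw [hv, LinearMap.mem_ker.1 hz, inner_zero_right]
  have hvB : l2Prod j L v ∈ boundarySpace G₀ G := by
    refine ⟨hLG ⟨v, rfl⟩, ?_⟩
    rw [← sub_sub_cancel f.1 (l2Prod j L v)]
    exact sub_mem f.2.2 horth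
  exact ⟨⟨_, hvB⟩, (mem_boundaryRel_iff hdense hG₀L hLG).2 ⟨v, rfl, hv⟩⟩

/-- The hypothesis `hG₀L` encodes `G₀ ⊆ L` and `K = 0` on `D(G₀)`, the hypothesis `hLG` encodes
`L ⊆ G`, and the instance argument stands for closedness of `(L, K)` as an operator on `X`. -/
theorem hRel_selfadjoint_general (hdense : Dense (G₀.domain : Set X))
    (hG₀L : graphSpace G₀ ≤ (LinearMap.ker K).map (l2Prod j L))
    (hLG : LinearMap.range (l2Prod j L) ≤ graphSpace G)
    [(LinearMap.range (l2Prod (l2Prod j L) K)).HasOrthogonalProjection] :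
    (boundaryRel G₀ G j L K).adjoint = boundaryRel G₀ G j L K :=
  adjoint_eq_self_of_le_adjoint_of_exists_sub_mem (boundaryRel_le_adjoint hdense hG₀L hLG)
    (exists_mem_boundaryRel_sub hdense hG₀L hLG)

end LinearRelation

section ClosedRange

omit [CompleteSpace E] [CompleteSpace H] [CompleteSpace U] [CompleteSpace E₀]

theorem isClosed_range_l2Prod_of_closedLK {j : E₀ →L[ℂ] E} {L : E₀ →L[ℂ] H} {K : E₀ →L[ℂ] U}
    (hclosed : ClosedLK j L K) :
    IsClosed (LinearMap.range (l2Prod (l2Prod j.toLinearMap L.toLinearMap) K.toLinearMap) :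
      Set (WithLp 2 (WithLp 2 (E × H) × U))) := by
  refine IsSeqClosed.isClosed fun s l hs hl ↦ ?_
  choose f hf using hs
  obtain rfl := funext hf
  have hfst := ((WithLp.prod_continuous_ofLp 2 _ _).fst.tendsto l).comp hl
  have hsnd := ((WithLp.prod_continuous_ofLp 2 _ _).snd.tendsto l).comp hl
  obtain ⟨w, hjw, hLw, hKw⟩ := hclosed f l.fst.fst l.fst.snd l.snd
    (((WithLp.prod_continuous_ofLp 2 _ _).fst.tendsto _).comp hfst)
    (((WithLp.prod_continuous_ofLp 2 _ _).snd.tendsto _).comp hfst) hsnd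
  exact ⟨w, WithLp.ofLp_injective 2
    (Prod.ext (WithLp.ofLp_injective 2 (Prod.ext hjw hLw)) hKw)⟩

end ClosedRange

section BoundaryDataSpace

omit [CompleteSpace E] [CompleteSpace U] [CompleteSpace E₀]

variable {G₀ : E →ₗ.[ℂ] H} {D₀ : H →ₗ.[ℂ] E} {j : E₀ →L[ℂ] E} {L : E₀ →L[ℂ] H}
  {K : E₀ →L[ℂ] U}

theorem Gap_apply (x : (Gop D₀).domain) : Gap D₀ x = Gop D₀ x :=
  dif_pos x.2

theorem toLp_Gap_mem_graphSpace_iff {x : E} :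
    WithLp.toLp 2 (x, Gap D₀ x) ∈ graphSpace (Gop D₀) ↔ x ∈ (Gop D₀).domain :=
  ⟨fun h ↦ LinearPMap.mem_domain_of_mem_graph h,
    fun h ↦ mem_graphSpace_iff.2 ⟨⟨x, h⟩, rfl, (Gap_apply ⟨x, h⟩).symm⟩⟩

theorem Gap_fst_of_mem_graphSpace {w : WithLp 2 (E × H)} (hw : w ∈ graphSpace (Gop D₀)) :
    Gap D₀ w.fst = w.snd := by
  obtain ⟨x, hx, hGx⟩ := mem_graphSpace_iff.1 hw
  rw [← hx, Gap_apply, hGx]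

theorem Gap_eq_of_le (hsub : G₀ ≤ Gop D₀) (x : G₀.domain) : Gap D₀ x = G₀ x :=
  Gap_fst_of_mem_graphSpace (LinearPMap.le_graph_of_le hsub (toLp_mem_graphSpace G₀ x))

theorem graphSpace_le_map_ker (hsub : G₀ ≤ Gop D₀) (hL : ∀ x : E₀, L x = Gap D₀ (j x))
    (hG₀subL : ∀ u ∈ G₀.domain, ∃ x : E₀, j x = u)
    (hK0 : ∀ x : E₀, j x ∈ G₀.domain → K x = 0) :
    graphSpace G₀ ≤ (LinearMap.ker K.toLinearMap).map (l2Prod j.toLinearMap L.toLinearMap) := by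
  intro w hw
  obtain ⟨x, hx, hG₀x⟩ := mem_graphSpace_iff.1 hw
  obtain ⟨v, hv⟩ := hG₀subL x x.2
  have hLv : L v = w.snd := by rw [hL, hv, Gap_eq_of_le hsub, hG₀x]
  exact ⟨v, hK0 v (hv ▸ x.2), WithLp.ofLp_injective 2 (Prod.ext (hv.trans hx) hLv)⟩

theorem range_l2Prod_le_graphSpace
    (hLsubG : ∀ x : E₀, j x ∈ (Gop D₀).domain ∧ L x = Gap D₀ (j x)) :
    LinearMap.range (l2Prod j.toLinearMap L.toLinearMap) ≤ graphSpace (Gop D₀) := by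
  rintro _ ⟨x, rfl⟩
  exact mem_graphSpace_iff.2
    ⟨⟨j x, (hLsubG x).1⟩, rfl, (Gap_apply _).symm.trans (hLsubG x).2.symm⟩

theorem toLp_Gap_mem_boundarySpace_iff (hsub : G₀ ≤ Gop D₀) {x : E} :
    WithLp.toLp 2 (x, Gap D₀ x) ∈ boundarySpace G₀ (Gop D₀) ↔ x ∈ BDG G₀ D₀ := by
  rw [boundarySpace, Submodule.mem_inf, toLp_Gap_mem_graphSpace_iff, mem_graphSpace_orthogonal_iff]
  refine and_congr_right fun _ ↦ Subtype.forall.trans (forall₂_congr fun v hv ↦ ?_)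
  rw [innG, Gap_eq_of_le hsub ⟨v, hv⟩]
  rfl

theorem inner_boundarySpace_eq_innG (v w : boundarySpace G₀ (Gop D₀)) :
    inner ℂ v w = innG D₀ v.1.fst w.1.fst := by
  rw [innG, Gap_fst_of_mem_graphSpace v.2.1, Gap_fst_of_mem_graphSpace w.2.1]
  rfl

/-- The pair of elements of `E` underlying a pair of points of the graph of `G`. It identifies
`BD(G) ⊕ BD(G)`, as a subset of `E × E`, with the square of `boundarySpace`. -/
def fstPair (G₀ : E →ₗ.[ℂ] H) (D₀ : H →ₗ.[ℂ] E)
    (p : boundarySpace G₀ (Gop D₀) × boundarySpace G₀ (Gop D₀)) : E × E :=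
  (p.1.1.fst, p.2.1.fst)

theorem range_fstPair (hsub : G₀ ≤ Gop D₀) :
    Set.range (fstPair G₀ D₀) = BDG G₀ D₀ ×ˢ BDG G₀ D₀ := by
  have hfst (w : boundarySpace G₀ (Gop D₀)) : w.1.fst ∈ BDG G₀ D₀ := by
    rw [← toLp_Gap_mem_boundarySpace_iff hsub, Gap_fst_of_mem_graphSpace w.2.1]
    exact w.2
  refine Set.Subset.antisymm (Set.range_subset_iff.2 fun p ↦ ⟨hfst p.1, hfst p.2⟩) ?_
  rintro ⟨x, y⟩ ⟨hx, hy⟩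
  exact ⟨(⟨_, (toLp_Gap_mem_boundarySpace_iff hsub).2 hx⟩,
    ⟨_, (toLp_Gap_mem_boundarySpace_iff hsub).2 hy⟩), rfl⟩

theorem fstPair_mem (hsub : G₀ ≤ Gop D₀)
    (p : boundarySpace G₀ (Gop D₀) × boundarySpace G₀ (Gop D₀)) :
    (fstPair G₀ D₀ p).1 ∈ BDG G₀ D₀ ∧ (fstPair G₀ D₀ p).2 ∈ BDG G₀ D₀ :=
  (range_fstPair hsub).le ⟨p, rfl⟩

theorem hRel_eq_image_fstPair (hsub : G₀ ≤ Gop D₀) :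
    hRel G₀ D₀ j L K = fstPair G₀ D₀ ''
      boundaryRel G₀ (Gop D₀) j.toLinearMap L.toLinearMap K.toLinearMap := by
  have hpre : fstPair G₀ D₀ ⁻¹' hRel G₀ D₀ j L K =
      boundaryRel G₀ (Gop D₀) j.toLinearMap L.toLinearMap K.toLinearMap := by
    ext p
    simp only [Set.mem_preimage, hRel, Set.mem_ofPred_eq, fstPair_mem hsub p, true_and]
    rw [fstPair, Gap_fst_of_mem_graphSpace p.2.2.1]
    rfl
  rw [← hpre, Set.image_preimage_eq_of_subset]
  exact range_fstPair hsub ▸ fun q hq ↦ ⟨hq.1, hq.2.1⟩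

theorem adjBDG_image_fstPair (hsub : G₀ ≤ Gop D₀)
    (R : Submodule ℂ (boundarySpace G₀ (Gop D₀) × boundarySpace G₀ (Gop D₀))) :
    adjBDG G₀ D₀ (fstPair G₀ D₀ '' R) = fstPair G₀ D₀ '' R.adjoint := by
  have hpre : fstPair G₀ D₀ ⁻¹' adjBDG G₀ D₀ (fstPair G₀ D₀ '' R) = R.adjoint := by
    ext p
    simp only [Set.mem_preimage, adjBDG, Set.mem_ofPred_eq, fstPair_mem hsub p, true_and,
      Set.forall_mem_image, SetLike.mem_coe, Submodule.mem_adjoint_iff, sub_eq_zero,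
      inner_boundarySpace_eq_innG, Prod.forall]
    rfl
  rw [← hpre, Set.image_preimage_eq_of_subset]
  exact range_fstPair hsub ▸ fun q hq ↦ ⟨hq.1, hq.2.1⟩

end BoundaryDataSpace

/-- [Trostorff 2015, Proposition 3.5]: the boundary relation `h` is selfadjoint. -/
theorem hRel_selfadjoint (G₀ : E →ₗ.[ℂ] H) (D₀ : H →ₗ.[ℂ] E)
    (hG₀dense : Dense (G₀.domain : Set E)) (hD₀dense : Dense (D₀.domain : Set H))
    (hG₀closed : G₀.IsClosed) (hD₀closed : D₀.IsClosed)
    (hsub : G₀ ≤ Gop D₀)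
    (j : E₀ →L[ℂ] E) (L : E₀ →L[ℂ] H) (K : E₀ →L[ℂ] U)
    (hj_inj : Function.Injective j) (hj_dense : DenseRange j)
    (hclosed : ClosedLK j L K)
    (hLsubG : ∀ x : E₀, j x ∈ (Gop D₀).domain ∧ L x = Gap D₀ (j x))
    (hG₀subL : ∀ u ∈ G₀.domain, ∃ x : E₀, j x = u)
    (hK0 : ∀ x : E₀, j x ∈ G₀.domain → K x = 0) :
    hRel G₀ D₀ j L K = adjBDG G₀ D₀ (hRel G₀ D₀ j L K) := by
  have := (isClosed_range_l2Prod_of_closedLK hclosed).completeSpace_coe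
  rw [hRel_eq_image_fstPair hsub, adjBDG_image_fstPair hsub,
    hRel_selfadjoint_general hG₀dense
      (graphSpace_le_map_ker hsub (fun x ↦ (hLsubG x).2) hG₀subL hK0)
      (range_l2Prod_le_graphSpace hLsubG)]
end
end

section
/- Let h ⊆ BD(G) ⊕ BD(G) be maximal monotone and selfadjoint, and write h = S ⊕ ({0} × U^⊥) with U := closure of [BD(G)]h and S : [BD(G)]h ⊆ U → U the associated nonnegative selfadjoint operator. Let R be a nonnegative selfadjoint operator on U with R ∘ R = S (the square root √S of S). Define E₀ := {u ∈ D(G) : π_{BD(G)}u ∈ D(R)}, L : E₀ → H, u ↦ Gu, and K : E₀ → U, u ↦ Rπ_{BD(G)}u. Then the operator (L,K) : E₀ ⊆ E → H ⊕ U is closed, and, equipping E₀ with the graph norm of (L,K), the data E₀, U, L, K satisfy the hypothesis: E₀ ⊆ E is dense with continuous embedding, G₀ ⊆ L ⊆ G, and K restricted to D(G₀) is zero. -/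
/-!
The map `u ↦ (u, Gu)` carries the graph inner product of `D_G` to the inner product of `E ⊕ H`,
and orthogonality makes `π_{BD(G)}` nonexpansive for the graph norm. Since `D₀` is densely defined,
`G` is closed; hence convergence of `wₙ` and `Lwₙ` is convergence in `D_G` and passes to
`π_{BD(G)} wₙ`. A selfadjoint operator `R` is closed, being its own adjoint, which gives the
closedness of `(L, K)`. The projection kills `D(G₀)`, so `D(G₀) ⊆ E₀` and `K = 0` there, and
`E₀` inherits density from `D(G₀)`.
-/

open scoped ComplexInnerProductSpace
open Filter Topology Classical

noncomputable section

variable {E H : Type*}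
  [NormedAddCommGroup E] [InnerProductSpace ℂ E] [CompleteSpace E]
  [NormedAddCommGroup H] [InnerProductSpace ℂ H] [CompleteSpace H]

/-- Monotonicity of a relation on `BD(G)` with respect to the graph inner product. -/
def IsMonotoneBDG (D₀ : H →ₗ.[ℂ] E) (h : Set (E × E)) : Prop :=
  ∀ p ∈ h, ∀ q ∈ h, 0 ≤ (innG D₀ (p.1 - q.1) (p.2 - q.2)).re

/-- Maximal monotonicity of a relation on the Hilbert space `BD(G)` (with the graph inner
product): `h` is monotone and has no proper monotone extension within `BD(G) ⊕ BD(G)`. -/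
def IsMaximalMonotoneBDG (G₀ : E →ₗ.[ℂ] H) (D₀ : H →ₗ.[ℂ] E) (h : Set (E × E)) : Prop :=
  h ⊆ (BDG G₀ D₀) ×ˢ (BDG G₀ D₀) ∧ IsMonotoneBDG D₀ h ∧
    ∀ b : Set (E × E), b ⊆ (BDG G₀ D₀) ×ˢ (BDG G₀ D₀) → IsMonotoneBDG D₀ b → h ⊆ b → b = h

/-- The pre-set `[BD(G)]h = {u : ∃ v, (u,v) ∈ h}` of a relation `h` on `BD(G)`. -/
def preSetE (h : Set (E × E)) : Set E := {u | ∃ v, (u, v) ∈ h}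

/-- The closure of a set `s ⊆ D(G)` inside the Hilbert space `D_G` (with the graph norm),
in sequential form. -/
def clG (D₀ : H →ₗ.[ℂ] E) (s : Set E) : Set E :=
  {u | u ∈ (Gop D₀).domain ∧ ∃ f : ℕ → E, (∀ n, f n ∈ s) ∧
    Tendsto f atTop (nhds u) ∧ Tendsto (fun n => Gap D₀ (f n)) atTop (nhds (Gap D₀ u))}

/-- The embedding `u ↦ (u, Gu)` of `D_G` onto the graph of `G`, inside the Hilbert sum `E ⊕ H`. It
expresses the geometry and topology of `D_G` through those of `E ⊕ H`; off `D(G)` its value is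
`(u, 0)`. -/
def graphPair (D₀ : H →ₗ.[ℂ] E) (u : E) : WithLp 2 (E × H) := WithLp.toLp 2 (u, Gap D₀ u)

/-- The property of being the orthogonal projection `π_{BD(G)}` of `D_G` onto `BD(G)`, for a map
`PG` defined on all of `E`; its values off `D(G)` are arbitrary. -/
def IsBDGProjection (G₀ : E →ₗ.[ℂ] H) (D₀ : H →ₗ.[ℂ] E) (PG : E → E) : Prop :=
  ∀ u ∈ (Gop D₀).domain, PG u ∈ BDG G₀ D₀ ∧ u - PG u ∈ G₀.domain

/-- Selfadjointness, for the graph inner product, of the operator `R` with domain `DR` in `U ⊆ D_G`: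
the graph of `R` on `DR` equals its adjoint relation in `U ⊕ U`. `R` is encoded as a map on
all of `E`, with arbitrary values off `DR`. -/
def IsSelfAdjointIn (D₀ : H →ₗ.[ℂ] E) (U DR : Set E) (R : E → E) : Prop :=
  {p : E × E | p.1 ∈ DR ∧ p.2 = R p.1} =
    {p : E × E | p.1 ∈ U ∧ p.2 ∈ U ∧ ∀ u ∈ DR, innG D₀ (R u) p.1 = innG D₀ u p.2}

section

omit [CompleteSpace E]

variable {ι : Type*} {l : Filter ι} {G₀ : E →ₗ.[ℂ] H} {D₀ : H →ₗ.[ℂ] E}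
  {PG R : E → E} {U DR s : Set E} {h : Set (E × E)} {f : ι → E} {u v w z : E}

lemma gap_of_mem (hu : u ∈ (Gop D₀).domain) : Gap D₀ u = Gop D₀ ⟨u, hu⟩ :=
  dif_pos hu

lemma gap_sub (hu : u ∈ (Gop D₀).domain) (hv : v ∈ (Gop D₀).domain) :
    Gap D₀ (u - v) = Gap D₀ u - Gap D₀ v := by
  rw [gap_of_mem hu, gap_of_mem hv, gap_of_mem (sub_mem hu hv), ← LinearPMap.map_sub]
  rfl

lemma graphPair_sub (hu : u ∈ (Gop D₀).domain) (hv : v ∈ (Gop D₀).domain) :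
    graphPair D₀ (u - v) = graphPair D₀ u - graphPair D₀ v := by
  rw [graphPair, gap_sub hu hv]
  rfl

variable (D₀) in
lemma graphPair_zero : graphPair D₀ 0 = 0 := by
  simpa using graphPair_sub (zero_mem (Gop D₀).domain) (zero_mem (Gop D₀).domain)

lemma eq_zero_of_graphPair_eq_zero (hu : graphPair D₀ u = 0) : u = 0 :=
  congrArg WithLp.fst hu

variable (D₀) in
lemma innG_eq_inner_graphPair (u v : E) :
    innG D₀ u v = ⟪graphPair D₀ u, graphPair D₀ v⟫ :=
  (WithLp.prod_inner_apply (graphPair D₀ u) (graphPair D₀ v)).symm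

lemma innG_zero_left : innG D₀ 0 v = 0 := by
  rw [innG_eq_inner_graphPair, graphPair_zero, inner_zero_left]

lemma innG_zero_right : innG D₀ u 0 = 0 := by
  rw [innG_eq_inner_graphPair, graphPair_zero, inner_zero_right]

lemma tendsto_graphPair_iff {y : WithLp 2 (E × H)} :
    Tendsto (fun i => graphPair D₀ (f i)) l (𝓝 y) ↔
      Tendsto f l (𝓝 y.fst) ∧ Tendsto (fun i => Gap D₀ (f i)) l (𝓝 y.snd) := by
  rw [(WithLp.homeomorphProd 2 E H).isInducing.tendsto_nhds_iff, Prod.tendsto_iff]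
  rfl

lemma mem_domain_and_gap_eq_of_tendsto [l.NeBot] {y : H} (hD₀ : Dense (D₀.domain : Set H))
    (hf : ∀ i, f i ∈ (Gop D₀).domain) (hfw : Tendsto f l (𝓝 w))
    (hfy : Tendsto (fun i => Gap D₀ (f i)) l (𝓝 y)) :
    w ∈ (Gop D₀).domain ∧ Gap D₀ w = y := by
  have gap_mem_graph (i : ι) : (f i, Gap D₀ (f i)) ∈ (Gop D₀).graph := by
    rw [gap_of_mem (hf i)]
    exact (Gop D₀).mem_graph ⟨f i, hf i⟩
  have gop_closed : (Gop D₀).IsClosed := LinearPMap.adjoint_isClosed (T := -D₀) hD₀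
  have limit_mem_graph : (w, y) ∈ (Gop D₀).graph :=
    gop_closed.mem_of_tendsto (hfw.prodMk_nhds hfy) (.of_forall gap_mem_graph)
  obtain ⟨⟨w, hw⟩, rfl, hy⟩ := (LinearPMap.mem_graph_iff _).1 limit_mem_graph
  exact ⟨hw, (gap_of_mem hw).trans hy⟩

lemma mem_clG_iff :
    u ∈ clG D₀ s ↔ u ∈ (Gop D₀).domain ∧ graphPair D₀ u ∈ closure (graphPair D₀ '' s) := by
  refine and_congr_right fun _ => ⟨?_, fun hu => ?_⟩
  · rintro ⟨f, hfs, hf⟩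
    exact mem_closure_of_tendsto (tendsto_graphPair_iff.2 hf)
      (.of_forall fun n => Set.mem_image_of_mem _ (hfs n))
  · obtain ⟨y, hys, hyu⟩ := mem_closure_iff_seq_limit.1 hu
    choose f hfs hfy using hys
    obtain rfl : (fun n => graphPair D₀ (f n)) = y := funext hfy
    exact ⟨f, hfs, tendsto_graphPair_iff.1 hyu⟩

lemma mem_clG_of_mem (hu : u ∈ (Gop D₀).domain) (hus : u ∈ s) : u ∈ clG D₀ s :=
  mem_clG_iff.2 ⟨hu, subset_closure (Set.mem_image_of_mem _ hus)⟩

variable (D₀ s) in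
lemma clG_clG : clG D₀ (clG D₀ s) = clG D₀ s := by
  refine Set.Subset.antisymm (fun u hu => ?_) fun u hu => mem_clG_of_mem hu.1 hu
  have image_subset : graphPair D₀ '' clG D₀ s ⊆ closure (graphPair D₀ '' s) :=
    Set.image_subset_iff.2 fun v hv => (mem_clG_iff.1 hv).2
  exact mem_clG_iff.2 ⟨hu.1, closure_minimal image_subset isClosed_closure (mem_clG_iff.1 hu).2⟩

lemma zero_mem_bdg : (0 : E) ∈ BDG G₀ D₀ :=
  ⟨zero_mem _, fun _ _ => innG_zero_left⟩

lemma sub_mem_bdg (hu : u ∈ BDG G₀ D₀) (hv : v ∈ BDG G₀ D₀) : u - v ∈ BDG G₀ D₀ := by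
  refine ⟨sub_mem hu.1 hv.1, fun w hw => ?_⟩
  rw [innG_eq_inner_graphPair, graphPair_sub hu.1 hv.1, inner_sub_left,
    ← innG_eq_inner_graphPair, ← innG_eq_inner_graphPair, hu.2 w hw, hv.2 w hw, sub_zero]

lemma eq_zero_of_mem_bdg_of_mem_domain (hu : u ∈ BDG G₀ D₀) (hu₀ : u ∈ G₀.domain) : u = 0 := by
  have self_orthogonal := hu.2 u hu₀
  rw [innG_eq_inner_graphPair, inner_self_eq_zero] at self_orthogonal
  exact eq_zero_of_graphPair_eq_zero self_orthogonal

lemma zero_mem_preSetE_adjBDG : (0 : E) ∈ preSetE (adjBDG G₀ D₀ h) :=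
  ⟨0, zero_mem_bdg, zero_mem_bdg, fun _ _ => innG_zero_right.trans innG_zero_right.symm⟩

namespace IsBDGProjection

lemma eq_of_mem_bdg (hPG : IsBDGProjection G₀ D₀ PG) (hu : u ∈ (Gop D₀).domain)
    (hv : v ∈ BDG G₀ D₀) (huv : u - v ∈ G₀.domain) : PG u = v := by
  have diff_mem_domain : PG u - v ∈ G₀.domain := by
    simpa only [sub_sub_sub_cancel_left] using sub_mem huv (hPG u hu).2
  exact sub_eq_zero.1 <|
    eq_zero_of_mem_bdg_of_mem_domain (sub_mem_bdg (hPG u hu).1 hv) diff_mem_domain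

lemma apply_eq_zero (hPG : IsBDGProjection G₀ D₀ PG) (hu : u ∈ (Gop D₀).domain)
    (hu₀ : u ∈ G₀.domain) : PG u = 0 :=
  hPG.eq_of_mem_bdg hu zero_mem_bdg (by rwa [sub_zero])

lemma apply_sub (hPG : IsBDGProjection G₀ D₀ PG) (hu : u ∈ (Gop D₀).domain)
    (hv : v ∈ (Gop D₀).domain) : PG (u - v) = PG u - PG v := by
  refine hPG.eq_of_mem_bdg (sub_mem hu hv) (sub_mem_bdg (hPG u hu).1 (hPG v hv).1) ?_
  rw [sub_sub_sub_comm]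
  exact sub_mem (hPG u hu).2 (hPG v hv).2

lemma norm_graphPair_apply_le (hPG : IsBDGProjection G₀ D₀ PG) (hu : u ∈ (Gop D₀).domain) :
    ‖graphPair D₀ (PG u)‖ ≤ ‖graphPair D₀ u‖ := by
  obtain ⟨⟨hPu, hPu_orth⟩, hdiff⟩ := hPG u hu
  have orthogonal : ⟪graphPair D₀ (PG u), graphPair D₀ u - graphPair D₀ (PG u)⟫ = 0 := by
    rw [← graphPair_sub hu hPu, ← innG_eq_inner_graphPair, hPu_orth _ hdiff]
  have pythagoras := norm_add_sq_eq_norm_sq_add_norm_sq_of_inner_eq_zero _ _ orthogonal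
  rw [add_sub_cancel] at pythagoras
  rw [mul_self_le_mul_self_iff (norm_nonneg _) (norm_nonneg _), pythagoras]
  exact le_add_of_nonneg_right (mul_self_nonneg _)

lemma tendsto_graphPair (hPG : IsBDGProjection G₀ D₀ PG) (hf : ∀ i, f i ∈ (Gop D₀).domain)
    (hw : w ∈ (Gop D₀).domain)
    (hfw : Tendsto (fun i => graphPair D₀ (f i)) l (𝓝 (graphPair D₀ w))) :
    Tendsto (fun i => graphPair D₀ (PG (f i))) l (𝓝 (graphPair D₀ (PG w))) := by
  have nonexpansive (i : ι) : ‖graphPair D₀ (PG (f i)) - graphPair D₀ (PG w)‖ ≤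
      ‖graphPair D₀ (f i) - graphPair D₀ w‖ := by
    rw [← graphPair_sub (hPG _ (hf i)).1.1 (hPG w hw).1.1, ← hPG.apply_sub (hf i) hw,
      ← graphPair_sub (hf i) hw]
    exact hPG.norm_graphPair_apply_le (sub_mem (hf i) hw)
  exact tendsto_iff_norm_sub_tendsto_zero.2 <|
    squeeze_zero (fun _ => norm_nonneg _) nonexpansive (tendsto_iff_norm_sub_tendsto_zero.1 hfw)

end IsBDGProjection

namespace IsSelfAdjointIn

lemma mem_and_apply_eq_iff (hR : IsSelfAdjointIn D₀ U DR R) :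
    v ∈ DR ∧ R v = z ↔ v ∈ U ∧ z ∈ U ∧ ∀ u ∈ DR, innG D₀ (R u) v = innG D₀ u z := by
  rw [eq_comm]
  exact Set.ext_iff.1 hR (v, z)

lemma subset (hR : IsSelfAdjointIn D₀ U DR R) : DR ⊆ U :=
  fun _ hv => (hR.mem_and_apply_eq_iff.1 ⟨hv, rfl⟩).1

lemma innG_apply_left (hR : IsSelfAdjointIn D₀ U DR R) (hu : u ∈ DR) (hv : v ∈ DR) :
    innG D₀ (R u) v = innG D₀ u (R v) :=
  (hR.mem_and_apply_eq_iff.1 ⟨hv, rfl⟩).2.2 u hu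

lemma zero_mem_and_apply_zero (hR : IsSelfAdjointIn D₀ U DR R) (hU : 0 ∈ U) :
    0 ∈ DR ∧ R 0 = 0 :=
  hR.mem_and_apply_eq_iff.2 ⟨hU, hU, fun _ _ => innG_zero_right.trans innG_zero_right.symm⟩

lemma mem_and_apply_eq_of_tendsto [l.NeBot] (hR : IsSelfAdjointIn D₀ U DR R)
    (hU : clG D₀ U = U) (hf : ∀ i, f i ∈ DR) (hw : w ∈ (Gop D₀).domain) (hz : z ∈ U)
    (hfw : Tendsto (fun i => graphPair D₀ (f i)) l (𝓝 (graphPair D₀ w)))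
    (hRz : Tendsto (fun i => graphPair D₀ (R (f i))) l (𝓝 (graphPair D₀ z))) :
    w ∈ DR ∧ R w = z := by
  have limit_mem : w ∈ U := hU ▸ mem_clG_iff.2 ⟨hw, mem_closure_of_tendsto hfw
    (.of_forall fun i => Set.mem_image_of_mem _ (hR.subset (hf i)))⟩
  refine hR.mem_and_apply_eq_iff.2 ⟨limit_mem, hz, fun u hu => ?_⟩
  have symmetric (i : ι) : ⟪graphPair D₀ u, graphPair D₀ (R (f i))⟫ =
      ⟪graphPair D₀ (R u), graphPair D₀ (f i)⟫ := by
    simpa only [innG_eq_inner_graphPair] using (hR.innG_apply_left hu (hf i)).symm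
  rw [innG_eq_inner_graphPair, innG_eq_inner_graphPair]
  exact tendsto_nhds_unique (tendsto_const_nhds.inner hfw)
    ((tendsto_const_nhds.inner hRz).congr symmetric)

end IsSelfAdjointIn

lemma mem_domain_and_apply_proj_eq_of_tendsto [l.NeBot] {y : H}
    (hD₀ : Dense (D₀.domain : Set H)) (hPG : IsBDGProjection G₀ D₀ PG) (hU : clG D₀ U = U)
    (hR : IsSelfAdjointIn D₀ U DR R)
    (hf : ∀ i, f i ∈ (Gop D₀).domain ∧ PG (f i) ∈ DR) (hz : z ∈ U)
    (hfw : Tendsto f l (𝓝 w)) (hfy : Tendsto (fun i => Gap D₀ (f i)) l (𝓝 y))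
    (hRz : Tendsto (fun i => graphPair D₀ (R (PG (f i)))) l (𝓝 (graphPair D₀ z))) :
    w ∈ (Gop D₀).domain ∧ PG w ∈ DR ∧ Gap D₀ w = y ∧ R (PG w) = z := by
  obtain ⟨hw, rfl⟩ := mem_domain_and_gap_eq_of_tendsto hD₀ (fun i => (hf i).1) hfw hfy
  have proj_tendsto := hPG.tendsto_graphPair (fun i => (hf i).1) hw
    (tendsto_graphPair_iff.2 ⟨hfw, hfy⟩)
  obtain ⟨hPw, hRPw⟩ := hR.mem_and_apply_eq_of_tendsto hU (fun i => (hf i).2)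
    (hPG w hw).1.1 hz proj_tendsto hRz
  exact ⟨hw, hPw, rfl, hRPw⟩

theorem sqrt_data_satisfies_hypothesis_general (hG₀ : Dense (G₀.domain : Set E))
    (hD₀ : Dense (D₀.domain : Set H)) (hsub : G₀ ≤ Gop D₀) (hPG : IsBDGProjection G₀ D₀ PG)
    (hU : clG D₀ U = U) (hU₀ : 0 ∈ U) (hR : IsSelfAdjointIn D₀ U DR R) :
    (∀ (f : ℕ → E) (w : E) (v : H) (z : E),
      (∀ n, f n ∈ (Gop D₀).domain ∧ PG (f n) ∈ DR) →
      z ∈ U →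
      Tendsto f atTop (𝓝 w) →
      Tendsto (fun n => Gap D₀ (f n)) atTop (𝓝 v) →
      Tendsto (fun n => R (PG (f n))) atTop (𝓝 z) →
      Tendsto (fun n => Gap D₀ (R (PG (f n)))) atTop (𝓝 (Gap D₀ z)) →
      (w ∈ (Gop D₀).domain ∧ PG w ∈ DR ∧ Gap D₀ w = v ∧ R (PG w) = z)) ∧
    Dense {u : E | u ∈ (Gop D₀).domain ∧ PG u ∈ DR} ∧
    (∃ c : ℝ, 0 < c ∧ ∀ u ∈ (Gop D₀).domain, PG u ∈ DR →
      ‖u‖ ^ 2 ≤ c * (‖u‖ ^ 2 + ‖Gap D₀ u‖ ^ 2 +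
        (‖R (PG u)‖ ^ 2 + ‖Gap D₀ (R (PG u))‖ ^ 2))) ∧
    (∀ u ∈ G₀.domain, u ∈ (Gop D₀).domain ∧ PG u ∈ DR) ∧
    (∀ u ∈ G₀.domain, R (PG u) = 0) := by
  obtain ⟨zero_mem, R_zero⟩ := hR.zero_mem_and_apply_zero hU₀
  have proj_eq_zero : ∀ u ∈ G₀.domain, PG u = 0 := fun u hu =>
    hPG.apply_eq_zero (hsub.1 hu) hu
  have domain_subset : ∀ u ∈ G₀.domain, u ∈ (Gop D₀).domain ∧ PG u ∈ DR := fun u hu =>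
    ⟨hsub.1 hu, (proj_eq_zero u hu).symm ▸ zero_mem⟩
  refine ⟨fun f w v z hf hz hfw hfv hRz hGRz => ?_, hG₀.mono domain_subset,
    ⟨1, one_pos, fun u _ _ => ?_⟩, domain_subset, fun u hu => ?_⟩
  · exact mem_domain_and_apply_proj_eq_of_tendsto hD₀ hPG hU hR hf hz hfw hfv
      (tendsto_graphPair_iff.2 ⟨hRz, hGRz⟩)
  · rw [one_mul, add_assoc]
    exact le_add_of_nonneg_right (by positivity)
  · rw [proj_eq_zero u hu, R_zero]

end

/-- [Trostorff 2015, Lemma 3.8]: Let `h ⊆ BD(G) ⊕ BD(G)` be maximal monotone and selfadjoint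
with Arens decomposition `h = S ⊕ ({0} × U^⊥)`, `U := closure([BD(G)]h)` (closure in the
graph norm), and let `R = √S` be a nonnegative selfadjoint square root of `S` in `U`, with
domain `DR`. Put `E₀ := {u ∈ D(G) : π_{BD(G)}u ∈ D(R)}`, `L : E₀ → H, u ↦ Gu` and
`K : E₀ → U, u ↦ Rπ_{BD(G)}u`. Then `(L,K) : E₀ ⊆ E → H ⊕ U` is closed and, equipping `E₀`
with the graph norm of `(L,K)`, the data `E₀, U, L, K` satisfy the hypothesis: `E₀ ⊆ E` is
dense with continuous embedding, `G₀ ⊆ L ⊆ G`, and `K` vanishes on `D(G₀)`. -/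
theorem sqrt_data_satisfies_hypothesis (G₀ : E →ₗ.[ℂ] H) (D₀ : H →ₗ.[ℂ] E)
    (hG₀dense : Dense (G₀.domain : Set E)) (hD₀dense : Dense (D₀.domain : Set H))
    (hG₀closed : G₀.IsClosed) (hD₀closed : D₀.IsClosed)
    (hsub : G₀ ≤ Gop D₀)
    -- the orthogonal projection onto `BD(G)`
    (PG : E → E)
    (hPG : ∀ u ∈ (Gop D₀).domain, PG u ∈ BDG G₀ D₀ ∧ u - PG u ∈ G₀.domain)
    -- `h` is maximal monotone and selfadjoint
    (h : Set (E × E))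
    (hmax : IsMaximalMonotoneBDG G₀ D₀ h)
    (hself : h = adjBDG G₀ D₀ h)
    -- the Arens decomposition `h = S ⊕ ({0} × U^⊥)` with `U = clG D₀ (preSetE h)`
    (S : E → E)
    (hSmem : ∀ u ∈ preSetE h, S u ∈ clG D₀ (preSetE h))
    (hArens : h = {q : E × E | q.1 ∈ preSetE h ∧ ∃ n ∈ BDG G₀ D₀,
      (∀ y ∈ clG D₀ (preSetE h), innG D₀ y n = 0) ∧ q.2 = S q.1 + n})
    -- `R = √S`: a nonnegative selfadjoint operator on `U` with domain `DR` and `R ∘ R = S`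
    (DR : Set E) (R : E → E)
    (hDR : DR ⊆ clG D₀ (preSetE h))
    (hRmem : ∀ u ∈ DR, R u ∈ clG D₀ (preSetE h))
    (hRnonneg : ∀ u ∈ DR, 0 ≤ (innG D₀ u (R u)).re)
    (hRself : {p : E × E | p.1 ∈ DR ∧ p.2 = R p.1} =
      {p : E × E | p.1 ∈ clG D₀ (preSetE h) ∧ p.2 ∈ clG D₀ (preSetE h) ∧
        ∀ u ∈ DR, innG D₀ (R u) p.1 = innG D₀ u p.2})
    (hRR : (∀ u : E, (u ∈ DR ∧ R u ∈ DR) ↔ u ∈ preSetE h) ∧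
      ∀ u ∈ preSetE h, R (R u) = S u) :
    -- `(L,K)` is closed (convergence in `U` being graph-norm convergence)
    (∀ (f : ℕ → E) (w : E) (v : H) (z : E),
      (∀ n, f n ∈ (Gop D₀).domain ∧ PG (f n) ∈ DR) →
      z ∈ clG D₀ (preSetE h) →
      Tendsto f atTop (nhds w) →
      Tendsto (fun n => Gap D₀ (f n)) atTop (nhds v) →
      Tendsto (fun n => R (PG (f n))) atTop (nhds z) →
      Tendsto (fun n => Gap D₀ (R (PG (f n)))) atTop (nhds (Gap D₀ z)) →
      (w ∈ (Gop D₀).domain ∧ PG w ∈ DR ∧ Gap D₀ w = v ∧ R (PG w) = z)) ∧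
    -- `E₀ ⊆ E` densely
    Dense {u : E | u ∈ (Gop D₀).domain ∧ PG u ∈ DR} ∧
    -- the embedding `E₀ → E` is continuous w.r.t. the graph norm of `(L,K)`
    (∃ c : ℝ, 0 < c ∧ ∀ u ∈ (Gop D₀).domain, PG u ∈ DR →
      ‖u‖ ^ 2 ≤ c * (‖u‖ ^ 2 + ‖Gap D₀ u‖ ^ 2 +
        (‖R (PG u)‖ ^ 2 + ‖Gap D₀ (R (PG u))‖ ^ 2))) ∧
    -- `G₀ ⊆ L ⊆ G` (recall `E₀ ⊆ D(G)` and `L = G` on `E₀` hold by definition)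
    (∀ u ∈ G₀.domain, u ∈ (Gop D₀).domain ∧ PG u ∈ DR) ∧
    -- `K` vanishes on `D(G₀)`
    (∀ u ∈ G₀.domain, R (PG u) = 0) := by
  have hU₀ : 0 ∈ preSetE h := hself ▸ zero_mem_preSetE_adjBDG
  exact sqrt_data_satisfies_hypothesis_general hG₀dense hD₀dense hsub hPG (clG_clG D₀ _)
    (mem_clG_of_mem (zero_mem _) hU₀) hRself
end
end
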